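/- Let W be a d-dimensional rational linear subspace of ℝⁿ, let {q₁,…,q_d} be a ℤ-basis of W ∩ ℤⁿ, and let ι : ℝᵈ → ℝⁿ, (c₁,…,c_d) ↦ c₁q₁ + ⋯ + c_d q_d. Let Z ⊆ W be any subset. If the congruence E(Z) on 𝕋[x₁^±,…,xₙ^±]_fcn is finitely generated, then the congruence E(ι⁻¹(Z)) on 𝕋[y₁^±,…,y_d^±]_fcn is also finitely generated. -/

import Mathlib

/-!
Pulling functions back along `ι` sends tropical Laurent polynomial functions on `ℝⁿ` to those on
`ℝᵈ`, the monomial `xᵘ` going to `y^w` with `w i = u · q i` (`IsTropFcn.comp`). If `S` generates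
`𝐄(Z)`, then the pairs `(f ∘ ι, g ∘ ι)` with `(f, g) ∈ S` generate `𝐄(ι⁻¹(Z))`.

The pulled-back pairs clearly lie in `𝐄(ι⁻¹(Z))`. The converse rests on two facts.
* The pullback is surjective (`exists_lift`). The lattice `W ∩ ℤⁿ` is saturated in `ℤⁿ`, so the
  quotient is finitely generated and torsion-free, hence free, and the inclusion of `W ∩ ℤⁿ` splits.
  Therefore every `w ∈ ℤᵈ` is of the form `(u · q i)ᵢ` (`exists_exponent_lift`).
* `ι` maps onto `W`, because `W` is spanned by lattice vectors. So if `f ∘ ι` and `g ∘ ι` agree on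
  `ι⁻¹(Z)`, then `f` and `g` agree on `Z ⊆ W`.

Thus every pair of `𝐄(ι⁻¹(Z))` is the pullback of a pair of `𝐄(Z) = ⟨S⟩`. Since the pairs of
functions on `ℝⁿ` whose pullback lies in a given congruence form a congruence
(`IsTropCongruence.comap`), the pullback of `⟨S⟩` lies in the congruence generated by the pullback
of `S`.
-/

noncomputable section

/-- The tropical semifield `𝕋 = ℝ ∪ {-∞}`, with tropical addition `⊔` (max) and
tropical multiplication `+`. -/
abbrev Trop : Type := WithBot ℝ

/-- `𝕋`-valued functions on `ℝⁿ`. -/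
abbrev TropFn (n : ℕ) : Type := (Fin n → ℝ) → Trop

/-- `f` is a tropical Laurent polynomial function: it is the pointwise maximum of finitely
many affine terms `p ↦ c + u·p` with `c ∈ ℝ` and `u ∈ ℤⁿ` (terms with coefficient `-∞` are
ignored, so we may take all coefficients real; the empty maximum is the constant `-∞`). -/
def IsTropFcn {n : ℕ} (f : TropFn n) : Prop :=
  ∃ A : Finset (ℝ × (Fin n → ℤ)),
    ∀ p, f p = A.sup fun t => ((t.1 + ∑ i, (t.2 i : ℝ) * p i : ℝ) : Trop)

/-- A congruence on the semiring `𝕋[x₁^±,…,xₙ^±]_fcn` of tropical Laurent polynomial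
functions: an equivalence relation on the set of tropical Laurent polynomial functions that
is compatible with the semiring addition (pointwise `⊔`) and multiplication (pointwise `+`). -/
structure IsTropCongruence (n : ℕ) (E : Set (TropFn n × TropFn n)) : Prop where
  mem_left : ∀ ⦃f g : TropFn n⦄, (f, g) ∈ E → IsTropFcn f
  mem_right : ∀ ⦃f g : TropFn n⦄, (f, g) ∈ E → IsTropFcn g
  refl : ∀ ⦃f : TropFn n⦄, IsTropFcn f → (f, f) ∈ E
  symm : ∀ ⦃f g : TropFn n⦄, (f, g) ∈ E → (g, f) ∈ E
  trans : ∀ ⦃f g h : TropFn n⦄, (f, g) ∈ E → (g, h) ∈ E → (f, h) ∈ E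
  add_compat : ∀ ⦃f₁ g₁ f₂ g₂ : TropFn n⦄,
    (f₁, g₁) ∈ E → (f₂, g₂) ∈ E → (f₁ ⊔ f₂, g₁ ⊔ g₂) ∈ E
  mul_compat : ∀ ⦃f₁ g₁ f₂ g₂ : TropFn n⦄,
    (f₁, g₁) ∈ E → (f₂, g₂) ∈ E → (f₁ + f₂, g₁ + g₂) ∈ E

/-- `⟨S⟩`: the smallest congruence containing `S`. -/
def congGen (n : ℕ) (S : Set (TropFn n × TropFn n)) : Set (TropFn n × TropFn n) :=
  ⋂₀ {E | IsTropCongruence n E ∧ S ⊆ E}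

/-- `𝐄(Z)`: the congruence of pairs of tropical Laurent polynomial functions agreeing on `Z`. -/
def Econg (n : ℕ) (Z : Set (Fin n → ℝ)) : Set (TropFn n × TropFn n) :=
  {fg | IsTropFcn fg.1 ∧ IsTropFcn fg.2 ∧ ∀ p ∈ Z, fg.1 p = fg.2 p}

theorem IsTropFcn.sup {n : ℕ} {f g : TropFn n} (hf : IsTropFcn f) (hg : IsTropFcn g) :
    IsTropFcn (f ⊔ g) := by
  classical
  obtain ⟨A, hA⟩ := hf
  obtain ⟨B, hB⟩ := hg
  exact ⟨A ∪ B, fun p => by rw [Pi.sup_apply, hA, hB, Finset.sup_union]⟩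

theorem WithBot.finset_sup_add {α : Type*} (A : Finset α) (f : α → WithBot ℝ) (c : WithBot ℝ) :
    A.sup f + c = A.sup fun a => f a + c :=
  Finset.apply_sup_eq_sup_comp (fun x => x + c)
    (fun x y => (max_add_add_right x y c).symm) (WithBot.bot_add c)

theorem IsTropFcn.add {n : ℕ} {f g : TropFn n} (hf : IsTropFcn f) (hg : IsTropFcn g) :
    IsTropFcn (f + g) := by
  classical
  obtain ⟨A, hA⟩ := hf
  obtain ⟨B, hB⟩ := hg
  refine ⟨(A ×ˢ B).image fun t => t.1 + t.2, fun p => ?_⟩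
  rw [Pi.add_apply, hA, hB, WithBot.finset_sup_add, Finset.sup_image, Finset.sup_product_left]
  refine Finset.sup_congr rfl fun a _ => ?_
  rw [add_comm, WithBot.finset_sup_add]
  refine Finset.sup_congr rfl fun b _ => ?_
  rw [← WithBot.coe_add]
  congr 1
  simp only [Prod.fst_add, Prod.snd_add, Pi.add_apply, Int.cast_add, add_mul,
    Finset.sum_add_distrib]
  ring

theorem isTropCongruence_Econg (n : ℕ) (Z : Set (Fin n → ℝ)) :
    IsTropCongruence n (Econg n Z) where
  mem_left _ _ h := h.1
  mem_right _ _ h := h.2.1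
  refl _ h := ⟨h, h, fun _ _ => rfl⟩
  symm _ _ h := ⟨h.2.1, h.1, fun p hp => (h.2.2 p hp).symm⟩
  trans _ _ _ h k := ⟨h.1, k.2.1, fun p hp => (h.2.2 p hp).trans (k.2.2 p hp)⟩
  add_compat _ _ _ _ h k := ⟨h.1.sup k.1, h.2.1.sup k.2.1, fun p hp =>
    congrArg₂ (· ⊔ ·) (h.2.2 p hp) (k.2.2 p hp)⟩
  mul_compat _ _ _ _ h k := ⟨h.1.add k.1, h.2.1.add k.2.1, fun p hp =>
    congrArg₂ (· + ·) (h.2.2 p hp) (k.2.2 p hp)⟩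

/-- The pairs of functions on `ℝⁿ` whose pullback lies in a congruence form a congruence. -/
theorem IsTropCongruence.comap {n d : ℕ} {E : Set (TropFn d × TropFn d)}
    (hE : IsTropCongruence d E) (ι : (Fin d → ℝ) → (Fin n → ℝ))
    (hcomp : ∀ f : TropFn n, IsTropFcn f → IsTropFcn (f ∘ ι)) :
    IsTropCongruence n
      {fg | IsTropFcn fg.1 ∧ IsTropFcn fg.2 ∧ (fg.1 ∘ ι, fg.2 ∘ ι) ∈ E} where
  mem_left _ _ h := h.1
  mem_right _ _ h := h.2.1
  refl f h := ⟨h, h, hE.refl (hcomp f h)⟩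
  symm _ _ h := ⟨h.2.1, h.1, hE.symm h.2.2⟩
  trans _ _ _ h k := ⟨h.1, k.2.1, hE.trans h.2.2 k.2.2⟩
  add_compat _ _ _ _ h k := ⟨h.1.sup k.1, h.2.1.sup k.2.1, hE.add_compat h.2.2 k.2.2⟩
  mul_compat _ _ _ _ h k := ⟨h.1.add k.1, h.2.1.add k.2.1, hE.mul_compat h.2.2 k.2.2⟩

/-- The adjunction `u · ι(c) = w · c` with `w i = u · q i`, which describes the pullback of a
monomial. -/
theorem pairing_comp {n d : ℕ} (q : Fin d → (Fin n → ℤ)) (u : Fin n → ℤ) (c : Fin d → ℝ) :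
    ∑ j, (u j : ℝ) * (∑ i, c i • (fun j => (q i j : ℝ)) : Fin n → ℝ) j =
      ∑ i, ((∑ j, u j * q i j : ℤ) : ℝ) * c i := by
  simp only [Finset.sum_apply, Pi.smul_apply, smul_eq_mul, Int.cast_sum, Int.cast_mul,
    Finset.mul_sum, Finset.sum_mul]
  rw [Finset.sum_comm]
  exact Finset.sum_congr rfl fun i _ => Finset.sum_congr rfl fun j _ => by ring

theorem IsTropFcn.comp {n d : ℕ} (q : Fin d → (Fin n → ℤ))
    (ι : (Fin d → ℝ) → (Fin n → ℝ)) (hι : ∀ c, ι c = ∑ i, c i • (fun j => (q i j : ℝ)))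
    (f : TropFn n) (hf : IsTropFcn f) : IsTropFcn (f ∘ ι) := by
  classical
  obtain ⟨A, hA⟩ := hf
  refine ⟨A.image fun t => (t.1, fun i => ∑ j, t.2 j * q i j), fun c => ?_⟩
  rw [Function.comp_apply, hA, Finset.sup_image]
  refine Finset.sup_congr rfl fun t _ => ?_
  rw [hι, pairing_comp]
  rfl

/-- If the vectors `q i` form a `ℤ`-basis of the lattice `W ∩ ℤⁿ`, then every `w ∈ ℤᵈ` is the
vector of pairings `(u · q i)ᵢ` for some `u ∈ ℤⁿ`: the inclusion of the saturated sublattice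
`W ∩ ℤⁿ` into `ℤⁿ` splits. -/
theorem exists_exponent_lift {n d : ℕ} (W : Submodule ℝ (Fin n → ℝ))
    (q : Fin d → (Fin n → ℤ)) (hqW : ∀ i, (fun j => (q i j : ℝ)) ∈ W)
    (hbasis : ∀ v : Fin n → ℤ, (fun j => (v j : ℝ)) ∈ W →
      ∃! c : Fin d → ℤ, v = ∑ i, c i • q i)
    (w : Fin d → ℤ) : ∃ u : Fin n → ℤ, ∀ i, ∑ j, u j * q i j = w i := by
  classical
  let φ : (Fin d → ℤ) →ₗ[ℤ] (Fin n → ℤ) := Fintype.linearCombination ℤ q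
  have hφ (c : Fin d → ℤ) : φ c = ∑ i, c i • q i := Fintype.linearCombination_apply ℤ q c
  have hcast (c : Fin d → ℤ) : (fun j => ((φ c) j : ℝ)) ∈ W := by
    have : (fun j => ((φ c) j : ℝ)) = ∑ i, (c i : ℝ) • (fun j => (q i j : ℝ)) := by
      ext j
      simp [hφ, Finset.sum_apply]
    rw [this]
    exact W.sum_mem fun i _ => W.smul_mem _ (hqW i)
  have hinj : Function.Injective φ := fun c c' h =>
    (hbasis (φ c) (hcast c)).unique (hφ c) (by rw [h, hφ])
  have hrange (v : Fin n → ℤ) (hv : (fun j => (v j : ℝ)) ∈ W) : v ∈ φ.range := by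
    obtain ⟨c, hc, -⟩ := hbasis v hv
    exact ⟨c, by rw [hφ, hc]⟩
  -- Saturation: `r • v ∈ W` with `r ≠ 0` forces `v ∈ W`.
  have htf : Module.IsTorsionFree ℤ ((Fin n → ℤ) ⧸ φ.range) := by
    refine Module.IsTorsionFree.of_smul_eq_zero fun r x h => ?_
    obtain ⟨v, rfl⟩ := Submodule.Quotient.mk_surjective _ x
    rw [← Submodule.Quotient.mk_smul, Submodule.Quotient.mk_eq_zero] at h
    rw [Submodule.Quotient.mk_eq_zero]
    refine or_iff_not_imp_left.2 fun hr => hrange v ?_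
    obtain ⟨c, hc⟩ := h
    have h1 := hcast c
    rw [hc] at h1
    have hr' : (r : ℝ) ≠ 0 := by exact_mod_cast hr
    have h2 := W.smul_mem (r : ℝ)⁻¹ h1
    convert h2 using 1
    ext j
    simp [hr']
  have hfree : Module.Free ℤ ((Fin n → ℤ) ⧸ φ.range) := Module.free_of_finite_type_torsion_free'
  obtain ⟨s, hs⟩ := Module.projective_lifting_property φ.range.mkQ LinearMap.id
    (Submodule.mkQ_surjective _)
  have hex : Function.Exact φ φ.range.mkQ := by
    rw [LinearMap.exact_iff, Submodule.ker_mkQ]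
  obtain ⟨ρ, hρ⟩ := ((hex.split_tfae hinj (Submodule.mkQ_surjective _)).out 0 1 rfl rfl).1 ⟨s, hs⟩
  refine ⟨fun j => ∑ k, w k * ρ (Pi.single j 1) k, fun i => ?_⟩
  have hq : φ (Pi.single i 1) = q i := by simp [φ]
  have h1 : ρ (q i) = Pi.single i 1 := by
    rw [← hq]
    exact LinearMap.congr_fun hρ _
  have h2 : ρ (q i) = ∑ j, q i j • ρ (Pi.single j 1) := by
    conv_lhs => rw [pi_eq_sum_univ' (q i)]
    simp only [map_sum, map_smul]
  have h3 (k : Fin d) : ∑ j, q i j * ρ (Pi.single j 1) k = (Pi.single i 1 : Fin d → ℤ) k := by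
    rw [← h1, h2]
    simp
  calc ∑ j, (∑ k, w k * ρ (Pi.single j 1) k) * q i j
      = ∑ k, w k * ∑ j, q i j * ρ (Pi.single j 1) k := by
        simp only [Finset.sum_mul, Finset.mul_sum]
        rw [Finset.sum_comm]
        exact Finset.sum_congr rfl fun i _ => Finset.sum_congr rfl fun j _ => by ring
    _ = w i := by simp [h3, Pi.single_apply]

/-- The pullback along `ι` is surjective on tropical Laurent polynomial functions as soon as it is
surjective on exponent vectors. -/
theorem exists_lift {n d : ℕ} (q : Fin d → (Fin n → ℤ))
    (ι : (Fin d → ℝ) → (Fin n → ℝ)) (hι : ∀ c, ι c = ∑ i, c i • (fun j => (q i j : ℝ)))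
    (hdual : ∀ w : Fin d → ℤ, ∃ u : Fin n → ℤ, ∀ i, ∑ j, u j * q i j = w i)
    (f : TropFn d) (hf : IsTropFcn f) : ∃ g : TropFn n, IsTropFcn g ∧ g ∘ ι = f := by
  classical
  obtain ⟨A, hA⟩ := hf
  choose u hu using hdual
  refine ⟨_, ⟨A.image fun t => (t.1, u t.2), fun p => rfl⟩, ?_⟩
  funext c
  rw [Function.comp_apply, hA, Finset.sup_image]
  refine Finset.sup_congr rfl fun t _ => ?_
  simp only [Function.comp_apply]
  rw [hι, pairing_comp]
  simp only [hu]

/-- `ι` maps onto the rational subspace `W`. -/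
theorem exists_preimage {n d : ℕ} (W : Submodule ℝ (Fin n → ℝ))
    (hrat : ∃ s : Set (Fin n → ℤ),
      W = Submodule.span ℝ ((fun u : Fin n → ℤ => fun i => (u i : ℝ)) '' s))
    (q : Fin d → (Fin n → ℤ))
    (hbasis : ∀ v : Fin n → ℤ, (fun j => (v j : ℝ)) ∈ W →
      ∃! c : Fin d → ℤ, v = ∑ i, c i • q i)
    (p : Fin n → ℝ) (hp : p ∈ W) :
    ∃ c : Fin d → ℝ, ∑ i, c i • (fun j => (q i j : ℝ)) = p := by
  obtain ⟨s, hs⟩ := hrat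
  let Φ : (Fin d → ℝ) →ₗ[ℝ] (Fin n → ℝ) :=
    Fintype.linearCombination ℝ fun i j => (q i j : ℝ)
  suffices h : W ≤ Φ.range by
    obtain ⟨c, hc⟩ := h hp
    exact ⟨c, by rw [← hc, Fintype.linearCombination_apply]⟩
  conv_lhs => rw [hs]
  refine Submodule.span_le.2 ?_
  rintro _ ⟨v, hv, rfl⟩
  have hvW : (fun j => (v j : ℝ)) ∈ W := by
    rw [hs]
    exact Submodule.subset_span ⟨v, hv, rfl⟩
  obtain ⟨c, hc, -⟩ := hbasis v hvW
  refine ⟨fun i => (c i : ℝ), ?_⟩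
  rw [Fintype.linearCombination_apply]
  ext j
  simp [hc, Finset.sum_apply]

/-- In the setting of the reduction `ι : ℝᵈ → ℝⁿ` onto a rational linear
subspace `W`, for any `Z ⊆ W`: if `𝐄(Z)` is finitely generated then so is `𝐄(ι⁻¹(Z))`. -/
theorem stmt12 (n d : ℕ)
    (W : Submodule ℝ (Fin n → ℝ))
    (hrat : ∃ s : Set (Fin n → ℤ),
      W = Submodule.span ℝ ((fun u : Fin n → ℤ => fun i => (u i : ℝ)) '' s))
    (hdim : Module.finrank ℝ W = d)
    (q : Fin d → (Fin n → ℤ))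
    (hqW : ∀ i, (fun j => (q i j : ℝ)) ∈ W)
    (hbasis : ∀ v : Fin n → ℤ, (fun j => (v j : ℝ)) ∈ W →
      ∃! c : Fin d → ℤ, v = ∑ i, c i • q i)
    (ι : (Fin d → ℝ) → (Fin n → ℝ))
    (hι : ∀ c, ι c = ∑ i, c i • (fun j => (q i j : ℝ)))
    (Z : Set (Fin n → ℝ)) (hZ : Z ⊆ (W : Set (Fin n → ℝ)))
    (hfg : ∃ S : Set (TropFn n × TropFn n),
      S.Finite ∧ (∀ fg ∈ S, IsTropFcn fg.1 ∧ IsTropFcn fg.2) ∧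
      Econg n Z = congGen n S) :
    ∃ S' : Set (TropFn d × TropFn d),
      S'.Finite ∧ (∀ fg ∈ S', IsTropFcn fg.1 ∧ IsTropFcn fg.2) ∧
      Econg d (ι ⁻¹' Z) = congGen d S' := by
  obtain ⟨S, hSfin, hStrop, hS⟩ := hfg
  have hcomp := IsTropFcn.comp q ι hι
  have hlift := exists_lift q ι hι (exists_exponent_lift W q hqW hbasis)
  refine ⟨(fun fg => (fg.1 ∘ ι, fg.2 ∘ ι)) '' S, hSfin.image _, ?_, Set.Subset.antisymm ?_ ?_⟩
  · rintro _ ⟨fg, hfg, rfl⟩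
    exact ⟨hcomp _ (hStrop fg hfg).1, hcomp _ (hStrop fg hfg).2⟩
  · rintro ⟨f', g'⟩ ⟨hf', hg', heq⟩ E ⟨hE, hSE⟩
    obtain ⟨f, hf, rfl⟩ := hlift f' hf'
    obtain ⟨g, hg, rfl⟩ := hlift g' hg'
    have hmem : (f, g) ∈ Econg n Z := by
      refine ⟨hf, hg, fun p hp => ?_⟩
      obtain ⟨c, hc⟩ := exists_preimage W hrat q hbasis p (hZ hp)
      rw [← hι] at hc
      subst hc
      exact heq c hp
    rw [hS] at hmem
    exact (hmem _ ⟨hE.comap ι hcomp, fun fg hfg =>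
      ⟨(hStrop fg hfg).1, (hStrop fg hfg).2, hSE ⟨fg, hfg, rfl⟩⟩⟩).2.2
  · refine Set.sInter_subset_of_mem ⟨isTropCongruence_Econg d _, ?_⟩
    rintro _ ⟨fg, hfg, rfl⟩
    have hmem : fg ∈ Econg n Z := by
      rw [hS]
      exact fun E hE => hE.2 hfg
    exact ⟨hcomp _ hmem.1, hcomp _ hmem.2.1, fun c hc => hmem.2.2 _ hc⟩
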